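/- Let k be a field of characteristic p > 0, let V be a k-vector space, and let δ, b_1, …, b_t, b_1', …, b_t' be pairwise commuting k-linear endomorphisms of V, each of which is p-nilpotent (i.e., its p-th power is 0). Then V, regarded as a k[u]/(u^p)-module with u acting as δ, is projective if and only if V, regarded as a k[v]/(v^p)-module with v acting as δ + Σ_{i=1}^{t} b_i∘b_i', is projective. -/

import Mathlib

open Polynomial TensorProduct

/-- The truncated polynomial algebra `k[t]/(t^p)`. -/
abbrev TruncPoly (k : Type*) [Field k] (p : ℕ) :=
  Polynomial k ⧸ Ideal.span {(Polynomial.X : Polynomial k) ^ p}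

/-- The unique `k`-algebra homomorphism `k[t]/(t^p) → C` sending `t` to a given
element `c` with `c ^ p = 0`. -/
noncomputable def truncHom {k : Type*} [Field k] {p : ℕ} {C : Type*} [Ring C] [Algebra k C]
    (c : C) (hc : c ^ p = 0) : TruncPoly k p →ₐ[k] C :=
  Ideal.Quotient.liftₐ _ (Polynomial.aeval c) (by
    intro a ha
    rw [Ideal.mem_span_singleton] at ha
    obtain ⟨b, rfl⟩ := ha
    simp [map_mul, map_pow, hc])

/-- `V` regarded as a module over `k[t]/(t^p)` with `t` acting as the `p`-nilpotent
`k`-linear endomorphism `θ`. -/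
noncomputable def truncModEnd {k : Type*} [Field k] {p : ℕ} {V : Type*} [AddCommGroup V]
    [Module k V] (θ : Module.End k V) (hθ : θ ^ p = 0) : Module (TruncPoly k p) V :=
  Module.compHom V (truncHom θ hθ).toRingHom

/-- In an algebra over a field of prime characteristic `p`, the sum of two commuting
`p`-nilpotent elements is again `p`-nilpotent. -/
lemma add_pow_eq_zero_of_commute {k : Type*} [Field k] {p : ℕ} [Fact p.Prime] [CharP k p]
    {R : Type*} [Ring R] [Algebra k R] {x y : R} (h : Commute x y)
    (hx : x ^ p = 0) (hy : y ^ p = 0) : (x + y) ^ p = 0 := by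
  have hpR : (p : R) = 0 := by
    rw [← map_natCast (algebraMap k R), CharP.cast_eq_zero, map_zero]
  rw [h.add_pow]
  refine Finset.sum_eq_zero ?_
  intro i hi
  rw [Finset.mem_range, Nat.lt_succ_iff] at hi
  rcases Nat.lt_or_ge i p with hlt | hge
  · rcases Nat.eq_zero_or_pos i with rfl | hpos
    · simp [hy]
    · obtain ⟨m, hm⟩ := (Fact.out : p.Prime).dvd_choose_self hpos.ne' hlt
      rw [hm]
      push_cast
      rw [hpR, zero_mul, mul_zero]
  · have : i = p := le_antisymm hi hge
    subst this
    simp [hx]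

/-- In an algebra over a field of prime characteristic `p`, a finite sum of pairwise
commuting `p`-nilpotent elements is again `p`-nilpotent. -/
lemma sum_pow_eq_zero_of_commute {k : Type*} [Field k] {p : ℕ} [Fact p.Prime] [CharP k p]
    {R : Type*} [Ring R] [Algebra k R] {ι : Type*} (s : Finset ι) (f : ι → R)
    (hcomm : ∀ i ∈ s, ∀ j ∈ s, Commute (f i) (f j))
    (hnil : ∀ i ∈ s, f i ^ p = 0) : (∑ i ∈ s, f i) ^ p = 0 := by
  induction s using Finset.cons_induction with
  | empty => simp [zero_pow (Fact.out : p.Prime).ne_zero]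
  | cons a s ha ih =>
    rw [Finset.sum_cons]
    refine add_pow_eq_zero_of_commute (k := k)
      (Commute.sum_right s f (f a) fun i hi =>
        hcomm a (Finset.mem_cons_self a s) i (Finset.mem_cons_of_mem hi))
      (hnil a (Finset.mem_cons_self a s))
      (ih (fun i hi j hj =>
          hcomm i (Finset.mem_cons_of_mem hi) j (Finset.mem_cons_of_mem hj))
        (fun i hi => hnil i (Finset.mem_cons_of_mem hi)))

/-- If `δ, b₁, …, b_t, b₁', …, b_t'` are pairwise commuting `p`-nilpotent elements of an
algebra over a field of prime characteristic `p`, then `δ + ∑ i, b i * b' i` is `p`-nilpotent. -/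
lemma delta_add_sum_mul_pow_eq_zero {k : Type*} [Field k] {p : ℕ} [Fact p.Prime] [CharP k p]
    {R : Type*} [Ring R] [Algebra k R] {t : ℕ} (δ : R) (b b' : Fin t → R)
    (hδb : ∀ i, Commute δ (b i)) (hδb' : ∀ i, Commute δ (b' i))
    (hbb : ∀ i j, Commute (b i) (b j)) (hbb' : ∀ i j, Commute (b i) (b' j))
    (hb'b' : ∀ i j, Commute (b' i) (b' j))
    (hδ : δ ^ p = 0) (hb : ∀ i, b i ^ p = 0) (hb' : ∀ i, b' i ^ p = 0) :
    (δ + ∑ i, b i * b' i) ^ p = 0 := by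
  refine add_pow_eq_zero_of_commute (k := k)
    (Commute.sum_right _ _ _ fun i _ => (hδb i).mul_right (hδb' i)) hδ ?_
  refine sum_pow_eq_zero_of_commute (k := k) Finset.univ _ ?_ ?_
  · intro i _ j _
    exact ((hbb i j).mul_left ((hbb' j i).symm)).mul_right
      ((hbb' i j).mul_left (hb'b' i j))
  · intro i _
    rw [(hbb' i i).mul_pow, hb i, zero_mul]

/-!
A module `V` over `k[u]/(u ^ p)` is projective iff it is free, iff `u ^ (p - 1)` and `u` form an
exact pair on `V`, that is, the `2`-periodic complex `⋯ → V → V → V → ⋯` with the maps `u` and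
`u ^ (p - 1)` in alternation is acyclic.

Suppose that `θ` has this property and commutes with `a` and `b`, where `a` is nilpotent and
`b ^ p = 0`. In characteristic `p` the operator `θ + b X` on formal power series over `V` has
vanishing `p`-th power; it is exact because its constant term `θ` is, by successive approximation.
The short exact sequence `0 → V⟦X⟧ → V⟦X⟧ → V → 0` given by `X - a` and evaluation at `X = a`
commutes with it and induces `θ + a b` on `V`, which is therefore exact by the long exact
sequence. Adding the products `b i * b' i` one at a time gives one implication, and subtracting
them again gives the other.
-/

section PeriodicExactness

variable {R M : Type*} [Ring R] [AddCommGroup M] [Module R M] {θ : Module.End R M} {n : ℕ}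

lemma pow_succ_eq_zero_of_exact (h : Function.Exact (θ ^ n) θ) : θ ^ (n + 1) = 0 := by
  rw [pow_succ']
  exact h.linearMap_comp_eq_zero

lemma exact_pow_pow (h : Function.Exact (θ ^ n) θ) (i j : ℕ) (hij : i + j = n + 1) :
    Function.Exact (θ ^ i) (θ ^ j) := by
  have hnil := pow_succ_eq_zero_of_exact h
  refine LinearMap.exact_of_comp_of_mem_range ?_ ?_
  · rw [← Module.End.mul_eq_comp, ← pow_add, add_comm, hij, hnil]
  induction j generalizing i with
  | zero => exact fun x hx ↦ ⟨0, by simpa using hx.symm⟩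
  | succ j ih =>
    intro x hx
    have hker : θ ((θ ^ j) x) = 0 := by rwa [← Module.End.mul_apply, ← pow_succ']
    obtain ⟨y, hy⟩ := (h _).mp hker
    have hn : θ ^ n = θ ^ j * θ ^ i := by rw [← pow_add]; congr 1; omega
    obtain ⟨z, hz⟩ := ih (i + 1) (by omega) (x - (θ ^ i) y) (by
      rw [map_sub, ← Module.End.mul_apply, ← hn, hy, sub_self])
    refine ⟨y + θ z, ?_⟩
    rw [map_add, ← Module.End.mul_apply (θ ^ i) θ, ← pow_succ, hz, add_sub_cancel]

/-- The cokernel case of the long exact sequence in the homology of the `2`-periodic complexes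
`⋯ → M --θ--> M --θ ^ n--> M --θ--> M → ⋯`. -/
lemma exact_pow_of_shortExact {L Q : Type*} [AddCommGroup L] [Module R L] [AddCommGroup Q]
    [Module R Q] {α : Module.End R L} {γ : Module.End R Q} {i : L →ₗ[R] M} {π : M →ₗ[R] Q}
    (hi : Function.Injective i) (hiπ : Function.Exact i π) (hπ : Function.Surjective π)
    (hαθ : θ ∘ₗ i = i ∘ₗ α) (hθγ : γ ∘ₗ π = π ∘ₗ θ)
    (hα : Function.Exact (α ^ n) α) (hθ : Function.Exact (θ ^ n) θ) :
    Function.Exact (γ ^ n) γ := by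
  have hθn : θ ^ (n + 1) = 0 := pow_succ_eq_zero_of_exact hθ
  have hαθ' (k : ℕ) (l : L) : (θ ^ k) (i l) = i ((α ^ k) l) :=
    LinearMap.congr_fun (Module.End.commute_pow_left_of_commute hαθ k) l
  have hθγ' (k : ℕ) (m : M) : (γ ^ k) (π m) = π ((θ ^ k) m) :=
    LinearMap.congr_fun (Module.End.commute_pow_left_of_commute hθγ k) m
  refine LinearMap.exact_of_comp_of_mem_range ?_ fun x hx ↦ ?_
  · rw [← Module.End.mul_eq_comp, ← pow_succ']
    ext x
    obtain ⟨m, rfl⟩ := hπ x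
    simp [hθγ', hθn]
  obtain ⟨m, rfl⟩ := hπ x
  obtain ⟨l, hl⟩ := (hiπ (θ m)).mp (by simpa [hx] using (hθγ' 1 m).symm)
  have hl_ker : (α ^ n) l = 0 := by
    apply hi
    rw [← hαθ', hl, ← Module.End.mul_apply, ← pow_succ, hθn, LinearMap.zero_apply, map_zero]
  obtain ⟨y, rfl⟩ : l ∈ Set.range α := by
    simpa using (exact_pow_pow hα 1 n (add_comm 1 n) l).mp hl_ker
  have hmy : θ (m - i y) = 0 := by
    rw [map_sub, ← hl, sub_eq_zero]
    exact (LinearMap.congr_fun hαθ y).symm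
  obtain ⟨z, hz⟩ := (hθ _).mp hmy
  exact ⟨π z, by rw [hθγ', hz, map_sub, hiπ.apply_apply_eq_zero, sub_zero]⟩

end PeriodicExactness

section FormalSeries

variable {R V : Type*} [CommRing R] [AddCommGroup V] [Module R V]

/-- Multiplication by `X` on the formal power series with coefficients in `V`, encoded as the
sequences `ℕ → V` of their coefficients. -/
def mulX (R V : Type*) [CommRing R] [AddCommGroup V] [Module R V] : Module.End R (ℕ → V) where
  toFun f n := n.casesOn 0 f
  map_add' f g := by ext (_ | n) <;> simp
  map_smul' c f := by ext (_ | n) <;> simp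

/-- The coefficientwise action of the endomorphisms of `V` on formal power series over `V`. -/
def coeffwise : Module.End R V →ₐ[R] Module.End R (ℕ → V) :=
  Algebra.lsmul R R (ℕ → V)

/-- The pencil `θ + b X`, acting on formal power series over `V`. -/
def linearPencil (θ b : Module.End R V) : Module.End R (ℕ → V) :=
  coeffwise θ + mulX R V * coeffwise b

@[simp]
lemma mulX_apply_zero (f : ℕ → V) : mulX R V f 0 = 0 := rfl

@[simp]
lemma mulX_apply_succ (f : ℕ → V) (n : ℕ) : mulX R V f (n + 1) = f n := rfl

@[simp]
lemma coeffwise_apply (θ : Module.End R V) (f : ℕ → V) (n : ℕ) : coeffwise θ f n = θ (f n) := rfl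

lemma single_add_mulX_tail (f : ℕ → V) :
    Pi.single 0 (f 0) + mulX R V (fun n ↦ f (n + 1)) = f := by
  ext (_ | n) <;> simp

lemma mulX_tail {f : ℕ → V} (h : f 0 = 0) : mulX R V (fun n ↦ f (n + 1)) = f := by
  simpa [h] using single_add_mulX_tail f

lemma mulX_injective : Function.Injective (mulX R V) := fun f g h ↦ by
  ext n
  simpa using congrFun h (n + 1)

lemma commute_coeffwise_mulX (θ : Module.End R V) : Commute (coeffwise θ) (mulX R V) := by
  ext f (_ | n) <;> simp

lemma eq_zero_of_forall_eq_mulX {d : ℕ → ℕ → V} (h : ∀ m, d m = mulX R V (d (m + 1)))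
    (m : ℕ) : d m = 0 := by
  ext n
  induction n generalizing m with
  | zero => rw [h, mulX_apply_zero, Pi.zero_apply]
  | succ n ih => rw [h, mulX_apply_succ, ih, Pi.zero_apply, Pi.zero_apply]

/-- Successive approximation: the coefficients of a preimage are found one at a time. -/
lemma mem_range_of_forall_eq_add_mulX {Ψ : Module.End R (ℕ → V)} (hΨ : Commute Ψ (mulX R V))
    {S : Set (ℕ → V)} (hS : ∀ f ∈ S, ∃ w, ∃ g ∈ S, f = Ψ (Pi.single 0 w) + mulX R V g)
    {f : ℕ → V} (hf : f ∈ S) : f ∈ LinearMap.range Ψ := by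
  choose! w next hnext hstep using hS
  let r (m : ℕ) : ℕ → V := next^[m] f
  have hr (m : ℕ) : r m ∈ S := by
    induction m with
    | zero => exact hf
    | succ m ih => simpa only [r, Function.iterate_succ_apply'] using hnext _ ih
  have hr_step (m : ℕ) : r m = Ψ (Pi.single 0 (w (r m))) + mulX R V (r (m + 1)) := by
    simpa only [r, Function.iterate_succ_apply'] using hstep _ (hr m)
  let z (m n : ℕ) : V := w (r (m + n))
  have hz (m : ℕ) : Pi.single 0 (w (r m)) + mulX R V (z (m + 1)) = z m := by
    have htail : (fun n ↦ z m (n + 1)) = z (m + 1) := by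
      ext n
      simp only [z, add_assoc, add_comm 1 n]
    rw [← htail]
    exact single_add_mulX_tail (R := R) (z m)
  have hd (m : ℕ) : r m - Ψ (z m) = mulX R V (r (m + 1) - Ψ (z (m + 1))) := by
    have hΨX : Ψ (mulX R V (z (m + 1))) = mulX R V (Ψ (z (m + 1))) := LinearMap.congr_fun hΨ _
    rw [← hz m, map_add, hΨX, map_sub]
    nth_rewrite 1 [hr_step m]
    abel
  exact ⟨z 0, (sub_eq_zero.mp (eq_zero_of_forall_eq_mulX hd 0)).symm⟩

lemma exact_pow_of_exact_constantCoeff {θ : Module.End R V} {Φ : Module.End R (ℕ → V)} {n : ℕ}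
    (hX : Commute Φ (mulX R V)) (hθ : ∀ f, Φ f 0 = θ (f 0)) (hΦ : Φ ^ (n + 1) = 0)
    (h : Function.Exact (θ ^ n) θ) : Function.Exact (Φ ^ n) Φ := by
  have hθn (f : ℕ → V) : (Φ ^ n) f 0 = (θ ^ n) (f 0) :=
    (LinearMap.congr_fun (Module.End.commute_pow_left_of_commute
      (f := LinearMap.proj 0) (LinearMap.ext fun f ↦ (hθ f).symm) n) f).symm
  have hΦn : Φ ∘ₗ Φ ^ n = 0 := by rw [← Module.End.mul_eq_comp, ← pow_succ', hΦ]
  refine LinearMap.exact_of_comp_of_mem_range hΦn fun f hf ↦ ?_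
  refine mem_range_of_forall_eq_add_mulX (hX.pow_left n) (S := {f | Φ f = 0}) (fun f hf ↦ ?_) hf
  obtain ⟨w, hw⟩ := (h (f 0)).mp (by rw [← hθ, hf, Pi.zero_apply])
  have hXg := mulX_tail (R := R) (f := f - (Φ ^ n) (Pi.single 0 w)) (by simp [hθn, hw])
  refine ⟨w, _, mulX_injective (R := R) ?_, (sub_eq_iff_eq_add'.mp hXg.symm)⟩
  rw [map_zero, ← Module.End.mul_apply, ← hX.eq, Module.End.mul_apply, hXg, map_sub, hf,
    ← LinearMap.comp_apply Φ, hΦn, LinearMap.zero_apply, sub_zero]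

/-- Evaluation at `X = a` of the formal power series over `V`, when `a ^ m = 0`. -/
def evalNilpotent (a : Module.End R V) (m : ℕ) : (ℕ → V) →ₗ[R] V :=
  ∑ i ∈ Finset.range m, (a ^ i) ∘ₗ LinearMap.proj i

lemma evalNilpotent_apply (a : Module.End R V) (m : ℕ) (f : ℕ → V) :
    evalNilpotent a m f = ∑ i ∈ Finset.range m, (a ^ i) (f i) := by
  simp [evalNilpotent]

section Eval

variable {a : Module.End R V} {m : ℕ}

lemma evalNilpotent_eq_add_tail (ha : a ^ m = 0) (f : ℕ → V) :
    evalNilpotent a m f = f 0 + a (evalNilpotent a m fun n ↦ f (n + 1)) := by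
  have hsum : ∑ i ∈ Finset.range (m + 1), (a ^ i) (f i) = evalNilpotent a m f := by
    rw [Finset.sum_range_succ, ha, LinearMap.zero_apply, add_zero, evalNilpotent_apply]
  rw [← hsum, Finset.sum_range_succ', evalNilpotent_apply, map_sum, add_comm]
  simp [pow_succ']

lemma evalNilpotent_mulX (ha : a ^ m = 0) (f : ℕ → V) :
    evalNilpotent a m (mulX R V f) = a (evalNilpotent a m f) := by
  simp [evalNilpotent_eq_add_tail ha (mulX R V f)]

lemma evalNilpotent_coeffwise {θ : Module.End R V} (h : Commute θ a) (f : ℕ → V) :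
    evalNilpotent a m (coeffwise θ f) = θ (evalNilpotent a m f) := by
  simp only [evalNilpotent_apply, coeffwise_apply, map_sum]
  exact Finset.sum_congr rfl fun i _ ↦ LinearMap.congr_fun (h.pow_right i).symm.eq (f i)

lemma evalNilpotent_surjective (ha : a ^ m = 0) : Function.Surjective (evalNilpotent a m) :=
  fun x ↦ ⟨Pi.single 0 x, by
    rw [evalNilpotent_eq_add_tail ha]
    simp [evalNilpotent_apply]⟩

/-- The quotient in the division of a formal power series by `X - a`. -/
def divXSub (a : Module.End R V) (m : ℕ) (f : ℕ → V) : ℕ → V :=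
  fun n ↦ evalNilpotent a m fun j ↦ f (n + 1 + j)

lemma mulX_sub_coeffwise_divXSub (ha : a ^ m = 0) (f : ℕ → V) :
    (mulX R V - coeffwise a) (divXSub a m f) = f - Pi.single 0 (evalNilpotent a m f) := by
  ext (_ | n)
  · simp [divXSub, evalNilpotent_eq_add_tail ha f, add_comm]
  · have hshift : (fun j ↦ f (n + 1 + (j + 1))) = fun j ↦ f (n + 1 + 1 + j) := by
      ext j
      rw [add_right_comm (n + 1) 1 j, ← add_assoc]
    simp only [divXSub, LinearMap.sub_apply, Pi.sub_apply, mulX_apply_succ, coeffwise_apply,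
      evalNilpotent_eq_add_tail ha fun j ↦ f (n + 1 + j), hshift]
    simp

lemma divXSub_mulX_sub_coeffwise (ha : a ^ m = 0) (f : ℕ → V) :
    divXSub a m ((mulX R V - coeffwise a) f) = f := by
  ext n
  have hsplit : (fun j ↦ (mulX R V - coeffwise a) f (n + 1 + j)) =
      (fun j ↦ f (n + j)) - coeffwise a fun j ↦ f (n + (j + 1)) := by
    ext j
    rw [add_right_comm n 1 j]
    simp only [LinearMap.sub_apply, Pi.sub_apply, mulX_apply_succ, coeffwise_apply]
    rw [add_assoc]
  rw [divXSub, hsplit, map_sub, evalNilpotent_coeffwise (Commute.refl a),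
    evalNilpotent_eq_add_tail ha fun j ↦ f (n + j), add_sub_cancel_right, add_zero]

lemma mulX_sub_coeffwise_injective (ha : a ^ m = 0) :
    Function.Injective (mulX R V - coeffwise a) :=
  Function.LeftInverse.injective (divXSub_mulX_sub_coeffwise ha)

lemma exact_mulX_sub_coeffwise_evalNilpotent (ha : a ^ m = 0) :
    Function.Exact (mulX R V - coeffwise a) (evalNilpotent a m) := by
  refine LinearMap.exact_of_comp_of_mem_range ?_ fun f hf ↦ ⟨divXSub a m f, ?_⟩
  · ext f
    simp [evalNilpotent_mulX ha, evalNilpotent_coeffwise (Commute.refl a)]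
  · rw [mulX_sub_coeffwise_divXSub ha, hf, Pi.single_zero, sub_zero]

end Eval

section Pencil

variable {θ a b : Module.End R V} {n : ℕ}

lemma commute_linearPencil_mulX : Commute (linearPencil θ b) (mulX R V) :=
  (commute_coeffwise_mulX θ).add_left
    ((Commute.refl (mulX R V)).mul_left (commute_coeffwise_mulX b))

lemma commute_linearPencil_coeffwise (hθa : Commute θ a) (hab : Commute a b) :
    Commute (linearPencil θ b) (coeffwise a) :=
  (hθa.map coeffwise).add_left
    ((commute_coeffwise_mulX a).symm.mul_left (hab.symm.map coeffwise))

lemma evalNilpotent_comp_linearPencil {m : ℕ} (ha : a ^ m = 0) (hθa : Commute θ a)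
    (hab : Commute a b) :
    (θ + a * b) ∘ₗ evalNilpotent a m = evalNilpotent a m ∘ₗ linearPencil θ b := by
  ext f
  simp [linearPencil, evalNilpotent_mulX ha, evalNilpotent_coeffwise hθa,
    evalNilpotent_coeffwise hab.symm]

lemma exact_pow_linearPencil (hN : linearPencil θ b ^ (n + 1) = 0)
    (h : Function.Exact (θ ^ n) θ) :
    Function.Exact (linearPencil θ b ^ n) (linearPencil θ b) :=
  exact_pow_of_exact_constantCoeff commute_linearPencil_mulX
    (fun f ↦ by simp [linearPencil]) hN h

lemma exact_pow_add_mul_of_linearPencil_pow_eq_zero (hθa : Commute θ a) (hab : Commute a b)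
    (ha : IsNilpotent a) (hN : linearPencil θ b ^ (n + 1) = 0)
    (h : Function.Exact (θ ^ n) θ) :
    Function.Exact ((θ + a * b) ^ n) (θ + a * b) := by
  obtain ⟨m, ha⟩ := ha
  have hcomm : Commute (linearPencil θ b) (mulX R V - coeffwise a) :=
    commute_linearPencil_mulX.sub_right (commute_linearPencil_coeffwise hθa hab)
  exact exact_pow_of_shortExact (mulX_sub_coeffwise_injective ha)
    (exact_mulX_sub_coeffwise_evalNilpotent ha) (evalNilpotent_surjective ha) hcomm.eq
    (evalNilpotent_comp_linearPencil ha hθa hab) (exact_pow_linearPencil hN h)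
    (exact_pow_linearPencil hN h)

end Pencil

end FormalSeries

section PencilSum

lemma commute_add_sum_mul {A ι : Type*} [Semiring A] {θ c : A} {b b' : ι → A} (s : Finset ι)
    (hθ : Commute θ c) (hb : ∀ i, Commute (b i) c) (hb' : ∀ i, Commute (b' i) c) :
    Commute (θ + ∑ i ∈ s, b i * b' i) c :=
  hθ.add_left (Commute.sum_left _ _ _ fun i _ ↦ (hb i).mul_left (hb' i))

variable {k : Type*} [Field k] {p : ℕ} [Fact p.Prime] [CharP k p] {V : Type*} [AddCommGroup V]
  [Module k V] {θ : Module.End k V}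

lemma linearPencil_pow_eq_zero {b : Module.End k V} (hθb : Commute θ b) (hθ : θ ^ p = 0)
    (hb : b ^ p = 0) : linearPencil θ b ^ p = 0 := by
  have hXb : Commute (mulX k V) (coeffwise b) := (commute_coeffwise_mulX b).symm
  refine add_pow_eq_zero_of_commute (k := k)
    ((commute_coeffwise_mulX θ).mul_right (hθb.map coeffwise)) ?_ ?_
  · rw [← map_pow, hθ, map_zero]
  · rw [hXb.mul_pow, ← map_pow, hb, map_zero, mul_zero]

lemma exact_pow_add_mul {a b : Module.End k V} (hθa : Commute θ a) (hθb : Commute θ b)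
    (hab : Commute a b) (ha : IsNilpotent a) (hb : b ^ p = 0)
    (h : Function.Exact (θ ^ (p - 1)) θ) :
    Function.Exact ((θ + a * b) ^ (p - 1)) (θ + a * b) := by
  have hp : p - 1 + 1 = p := Nat.sub_add_cancel (Fact.out : p.Prime).one_le
  have hθ : θ ^ p = 0 := hp ▸ pow_succ_eq_zero_of_exact h
  refine exact_pow_add_mul_of_linearPencil_pow_eq_zero hθa hab ha ?_ h
  rw [hp, linearPencil_pow_eq_zero hθb hθ hb]

variable {ι : Type*} {b b' : ι → Module.End k V}

lemma exact_pow_add_sum_mul (s : Finset ι) (hθb : ∀ i, Commute θ (b i))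
    (hθb' : ∀ i, Commute θ (b' i)) (hbb : ∀ i j, Commute (b i) (b j))
    (hbb' : ∀ i j, Commute (b i) (b' j)) (hb'b' : ∀ i j, Commute (b' i) (b' j))
    (hb : ∀ i, IsNilpotent (b i)) (hb' : ∀ i, b' i ^ p = 0)
    (h : Function.Exact (θ ^ (p - 1)) θ) :
    Function.Exact ((θ + ∑ i ∈ s, b i * b' i) ^ (p - 1)) (θ + ∑ i ∈ s, b i * b' i) := by
  induction s using Finset.cons_induction with
  | empty => simpa using h
  | cons i s hi ih =>
    rw [Finset.sum_cons, add_comm (b i * b' i), ← add_assoc]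
    exact exact_pow_add_mul
      (commute_add_sum_mul s (hθb i) (hbb · i) fun j ↦ (hbb' i j).symm)
      (commute_add_sum_mul s (hθb' i) (hbb' · i) (hb'b' · i)) (hbb' i i) (hb i) (hb' i) ih

lemma add_sum_mul_pow_eq_zero (s : Finset ι) (hθb : ∀ i, Commute θ (b i))
    (hθb' : ∀ i, Commute θ (b' i)) (hbb : ∀ i j, Commute (b i) (b j))
    (hbb' : ∀ i j, Commute (b i) (b' j)) (hb'b' : ∀ i j, Commute (b' i) (b' j))
    (hθ : θ ^ p = 0) (hb' : ∀ i, b' i ^ p = 0) : (θ + ∑ i ∈ s, b i * b' i) ^ p = 0 := by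
  refine add_pow_eq_zero_of_commute (k := k)
    (Commute.sum_right _ _ _ fun i _ ↦ (hθb i).mul_right (hθb' i)) hθ ?_
  refine sum_pow_eq_zero_of_commute (k := k) s _ (fun i _ j _ ↦ ?_) fun i _ ↦ ?_
  · exact ((hbb i j).mul_left (hbb' j i).symm).mul_right ((hbb' i j).mul_left (hb'b' i j))
  · rw [(hbb' i i).mul_pow, hb', mul_zero]

end PencilSum

section Freeness

universe w

variable {A : Type*} [CommRing A] {u : A} {n : ℕ}

lemma exact_smul_of_flat {r s : A} (h : Function.Exact (r • · : A → A) (s • · : A → A))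
    (M : Type*) [AddCommGroup M] [Module A M] [Module.Flat A M] :
    Function.Exact (r • · : M → M) (s • · : M → M) := by
  let lid := TensorProduct.lid A M
  have hlid (c : A) : LinearMap.lsmul A M c ∘ₗ lid = lid ∘ₗ (LinearMap.lsmul A A c).rTensor M := by
    ext m
    simp [lid]
  exact (Module.Flat.rTensor_exact (f := LinearMap.lsmul A A r) (g := LinearMap.lsmul A A s) M
    h).of_ladder_linearEquiv_of_exact (hlid r) (hlid s)

variable {F : Type*} {M : Type w} [AddCommGroup F] [Module A F] [AddCommGroup M] [Module A M]
  {φ : F →ₗ[A] M}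

lemma exists_eq_smul_of_forall_dvd {ι : Type*} {f : ι →₀ A} (h : ∀ i, u ∣ f i) :
    ∃ g, f = u • g := by
  choose q hq using h
  refine ⟨f.sum fun i _ ↦ Finsupp.single i (q i), ?_⟩
  simp only [Finsupp.smul_sum, Finsupp.smul_single, smul_eq_mul, ← hq]
  exact f.sum_single.symm

lemma surjective_of_forall_exists_add_smul (hu : IsNilpotent u)
    (hφ : ∀ x, ∃ f y, x = φ f + u • y) : Function.Surjective φ := by
  obtain ⟨m, hm⟩ := hu
  have happrox (j : ℕ) (x : M) : ∃ f y, x = φ f + u ^ j • y := by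
    induction j with
    | zero => exact ⟨0, x, by simp⟩
    | succ j ih =>
      obtain ⟨f, y, rfl⟩ := ih
      obtain ⟨g, z, rfl⟩ := hφ y
      exact ⟨f + u ^ j • g, z, by simp only [map_add, map_smul, smul_add, smul_smul, pow_succ,
        add_assoc]⟩
  intro x
  obtain ⟨f, y, rfl⟩ := happrox m x
  exact ⟨f, by rw [hm, zero_smul, add_zero]⟩

/-- Exactness forces the kernel `K` of `φ` to satisfy `K = u K`, so it vanishes by nilpotence. -/
lemma injective_of_exact_pow_smul (hu : u ^ (n + 1) = 0)
    (h : Function.Exact (u ^ n • · : M → M) (u • · : M → M)) (hφ : Function.Surjective φ)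
    (hφu : ∀ f y, φ f = u • y → ∃ g, f = u • g) : Function.Injective φ := by
  have hdiv (f : F) (hf : φ f = 0) : ∃ g, φ g = 0 ∧ f = u • g := by
    obtain ⟨g, rfl⟩ := hφu f 0 (by rw [hf, smul_zero])
    obtain ⟨y, hy⟩ := (h (φ g)).mp (by simpa only [map_smul] using hf)
    obtain ⟨e, rfl⟩ := hφ y
    refine ⟨g - u ^ n • e, ?_, ?_⟩
    · rw [map_sub, map_smul, sub_eq_zero]
      exact hy.symm
    · rw [smul_sub, smul_smul, ← pow_succ', hu, zero_smul, sub_zero]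
  have hdiv_pow (j : ℕ) (f : F) (hf : φ f = 0) : ∃ g, φ g = 0 ∧ f = u ^ j • g := by
    induction j with
    | zero => exact ⟨f, hf, by simp⟩
    | succ j ih =>
      obtain ⟨g, hg, rfl⟩ := ih
      obtain ⟨e, he, rfl⟩ := hdiv g hg
      exact ⟨e, he, by rw [smul_smul, pow_succ]⟩
  refine (injective_iff_map_eq_zero φ).mpr fun f hf ↦ ?_
  obtain ⟨g, -, rfl⟩ := hdiv_pow (n + 1) f hf
  rw [hu, zero_smul]

/-- Lifts to `M` of a basis of `M / u M` over the field `A / (u)` give `φ`. -/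
lemma exists_finsupp_linearMap_bijective_mod [(Ideal.span {u}).IsMaximal] (M : Type w)
    [AddCommGroup M] [Module A M] :
    ∃ (ι : Type w) (φ : (ι →₀ A) →ₗ[A] M), (∀ x, ∃ f y, x = φ f + u • y) ∧
      ∀ f y, φ f = u • y → ∃ g, f = u • g := by
  let I : Ideal A := Ideal.span {u}
  let _ : Field (A ⧸ I) := Ideal.Quotient.field I
  let uM : Submodule A M := I • ⊤
  have mem_uM (x : M) : x ∈ uM ↔ ∃ y, u • y = x := by
    simp [uM, I, Submodule.ideal_span_singleton_smul, Submodule.mem_smul_pointwise_iff_exists]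
  let B := Module.Basis.ofVectorSpace (A ⧸ I) (M ⧸ uM)
  choose v hv using fun i ↦ uM.mkQ_surjective (B i)
  let φ := Finsupp.linearCombination A v
  have hφ (f : _ →₀ A) : B.repr (uM.mkQ (φ f)) = f.mapRange (Ideal.Quotient.mk I) (map_zero _) := by
    induction f using Finsupp.induction_linear with
    | zero => simp
    | add f g hf hg => rw [map_add, map_add, map_add, hf, hg, Finsupp.mapRange_add (map_add _)]
    | single i c =>
      have hsmul : uM.mkQ (c • v i) = Ideal.Quotient.mk I c • B i := by
        rw [map_smul, hv]
        rfl
      rw [Finsupp.linearCombination_single, hsmul, map_smul, B.repr_self, Finsupp.smul_single,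
        Finsupp.mapRange_single, smul_eq_mul, mul_one]
  refine ⟨_, φ, fun x ↦ ?_, fun f y hf ↦ ?_⟩
  · obtain ⟨f, hf⟩ := Finsupp.mapRange_surjective _ (map_zero _) Ideal.Quotient.mk_surjective
      (B.repr (uM.mkQ x))
    have hx : uM.mkQ x = uM.mkQ (φ f) := B.repr.injective (by rw [hφ, hf])
    obtain ⟨y, hy⟩ := (mem_uM _).mp ((Submodule.Quotient.eq uM).mp hx)
    exact ⟨f, y, by rw [hy, add_sub_cancel]⟩
  · have hzero : f.mapRange (Ideal.Quotient.mk I) (map_zero _) = 0 := by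
      have huy : uM.mkQ (u • y) = 0 :=
        (Submodule.Quotient.mk_eq_zero uM).mpr ((mem_uM _).mpr ⟨y, rfl⟩)
      rw [← hφ, hf, huy, map_zero]
    refine exists_eq_smul_of_forall_dvd fun i ↦ ?_
    rw [← Ideal.mem_span_singleton, ← Ideal.Quotient.eq_zero_iff_mem]
    exact DFunLike.congr_fun hzero i

lemma free_of_exact_pow_smul [(Ideal.span {u}).IsMaximal] (hu : u ^ (n + 1) = 0)
    (h : Function.Exact (u ^ n • · : M → M) (u • · : M → M)) : Module.Free A M := by
  obtain ⟨ι, φ, hspan, hindep⟩ := exists_finsupp_linearMap_bijective_mod (u := u) M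
  have hsurj : Function.Surjective φ := surjective_of_forall_exists_add_smul ⟨n + 1, hu⟩ hspan
  exact Module.Free.of_equiv
    (LinearEquiv.ofBijective φ ⟨injective_of_exact_pow_smul hu h hsurj hindep, hsurj⟩)

end Freeness

section TruncPoly

variable (k : Type*) [Field k]

/-- The class of the variable in `TruncPoly k p`. -/
noncomputable def truncX (p : ℕ) : TruncPoly k p := Ideal.Quotient.mk _ X

lemma truncX_pow_self (p : ℕ) : truncX k p ^ p = 0 := by
  rw [truncX, ← map_pow, Ideal.Quotient.eq_zero_iff_mem]
  exact Ideal.mem_span_singleton_self _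

lemma isMaximal_span_truncX {p : ℕ} (hp : p ≠ 0) : (Ideal.span {truncX k p}).IsMaximal := by
  have hX : (Ideal.span {(X : k[X])}).IsMaximal :=
    PrincipalIdealRing.isMaximal_of_irreducible irreducible_X
  have hmap := hX.map_of_surjective_of_ker_le
    (f := Ideal.Quotient.mk (Ideal.span {(X : k[X]) ^ p})) Ideal.Quotient.mk_surjective
    (by rw [Ideal.mk_ker, Ideal.span_singleton_le_span_singleton]; exact dvd_pow_self X hp)
  rwa [Ideal.map_span, Set.image_singleton] at hmap

lemma exact_truncX_pow_smul (n : ℕ) :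
    Function.Exact (truncX k (n + 1) ^ n • · : TruncPoly k (n + 1) → TruncPoly k (n + 1))
      (truncX k (n + 1) • ·) := by
  refine Function.Exact.of_comp_of_mem_range ?_ fun f hf ↦ ?_
  · funext f
    simp only [Function.comp_apply, smul_eq_mul, ← mul_assoc, ← pow_succ', truncX_pow_self,
      zero_mul, Pi.zero_apply]
  obtain ⟨f, rfl⟩ := Ideal.Quotient.mk_surjective f
  have hdvd : (X : k[X]) ^ n ∣ f := by
    rwa [truncX, smul_eq_mul, ← map_mul, Ideal.Quotient.eq_zero_iff_mem,
      Ideal.mem_span_singleton, pow_succ', mul_dvd_mul_iff_left X_ne_zero] at hf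
  obtain ⟨g, rfl⟩ := hdvd
  exact ⟨Ideal.Quotient.mk _ g, by simp only [truncX, smul_eq_mul, map_mul, map_pow]⟩

variable {k}

lemma projective_truncPoly_iff_exact {n : ℕ} (M : Type*) [AddCommGroup M]
    [Module (TruncPoly k (n + 1)) M] :
    Module.Projective (TruncPoly k (n + 1)) M ↔
      Function.Exact (truncX k (n + 1) ^ n • · : M → M) (truncX k (n + 1) • · : M → M) := by
  refine ⟨fun _ ↦ exact_smul_of_flat (exact_truncX_pow_smul k n) M, fun h ↦ ?_⟩
  have := isMaximal_span_truncX k n.succ_ne_zero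
  have := free_of_exact_pow_smul (truncX_pow_self k (n + 1)) h
  infer_instance

lemma projective_truncModEnd_iff_exact {p : ℕ} (hp : p ≠ 0) {V : Type*} [AddCommGroup V]
    [Module k V] (θ : Module.End k V) (hθ : θ ^ p = 0) :
    (letI := truncModEnd θ hθ
     Module.Projective (TruncPoly k p) V) ↔ Function.Exact (θ ^ (p - 1)) θ := by
  obtain ⟨n, rfl⟩ := Nat.exists_eq_add_one_of_ne_zero hp
  let _ := truncModEnd θ hθ
  have hX : truncHom θ hθ (truncX k (n + 1)) = θ := aeval_X θ
  have hsmul (j : ℕ) : (truncX k (n + 1) ^ j • · : V → V) = ⇑(θ ^ j) := by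
    conv_rhs => rw [← hX, ← map_pow]
    rfl
  have h1 := hsmul 1
  rw [pow_one, pow_one] at h1
  refine (projective_truncPoly_iff_exact V).trans ?_
  rw [hsmul, h1, Nat.add_sub_cancel]

end TruncPoly

theorem statement1_general (k : Type*) [Field k] (p : ℕ) [Fact p.Prime] [CharP k p]
    (V : Type*) [AddCommGroup V] [Module k V]
    {ι : Type*} [Fintype ι] (δ : Module.End k V) (b b' : ι → Module.End k V)
    (hδb : ∀ i, Commute δ (b i)) (hδb' : ∀ i, Commute δ (b' i))
    (hbb : ∀ i j, Commute (b i) (b j)) (hbb' : ∀ i j, Commute (b i) (b' j))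
    (hb'b' : ∀ i j, Commute (b' i) (b' j))
    (hδ : δ ^ p = 0) (hb : ∀ i, IsNilpotent (b i)) (hb' : ∀ i, b' i ^ p = 0) :
    (letI := truncModEnd δ hδ
     Module.Projective (TruncPoly k p) V) ↔
    (letI := truncModEnd (δ + ∑ i, b i * b' i)
        (add_sum_mul_pow_eq_zero Finset.univ hδb hδb' hbb hbb' hb'b' hδ hb')
     Module.Projective (TruncPoly k p) V) := by
  have hp : p ≠ 0 := (Fact.out : p.Prime).ne_zero
  rw [projective_truncModEnd_iff_exact hp, projective_truncModEnd_iff_exact hp]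
  refine ⟨exact_pow_add_sum_mul Finset.univ hδb hδb' hbb hbb' hb'b' hb hb', fun h ↦ ?_⟩
  have hback : δ + ∑ i, b i * b' i + ∑ i, -b i * b' i = δ := by
    simp [neg_mul, Finset.sum_neg_distrib]
  rw [← hback]
  exact exact_pow_add_sum_mul Finset.univ
    (fun i ↦ (commute_add_sum_mul _ (hδb i) (hbb · i) fun j ↦ (hbb' i j).symm).neg_right)
    (fun i ↦ commute_add_sum_mul _ (hδb' i) (hbb' · i) (hb'b' · i))
    (fun i j ↦ ((hbb i j).neg_left).neg_right) (fun i j ↦ (hbb' i j).neg_left) hb'b'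
    (fun i ↦ (hb i).neg) hb' h

theorem statement1 (k : Type*) [Field k] (p : ℕ) [Fact p.Prime] [CharP k p]
    (V : Type*) [AddCommGroup V] [Module k V]
    (t : ℕ) (δ : Module.End k V) (b b' : Fin t → Module.End k V)
    (hδb : ∀ i, Commute δ (b i)) (hδb' : ∀ i, Commute δ (b' i))
    (hbb : ∀ i j, Commute (b i) (b j)) (hbb' : ∀ i j, Commute (b i) (b' j))
    (hb'b' : ∀ i j, Commute (b' i) (b' j))
    (hδ : δ ^ p = 0) (hb : ∀ i, b i ^ p = 0) (hb' : ∀ i, b' i ^ p = 0) :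
    (letI := truncModEnd δ hδ
     Module.Projective (TruncPoly k p) V) ↔
    (letI := truncModEnd (δ + ∑ i, b i * b' i)
        (delta_add_sum_mul_pow_eq_zero (k := k) δ b b' hδb hδb' hbb hbb' hb'b' hδ hb hb')
     Module.Projective (TruncPoly k p) V) :=
  statement1_general k p V δ b b' hδb hδb' hbb hbb' hb'b' hδ (fun i ↦ ⟨p, hb i⟩) hb'
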